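/- Assume θ < -1, and b ≥ 0, c ≥ 0 on Ω. Let h be a boundary datum with h > 0 on ∂Ω, set h̄ := sup_{∂Ω} h and ν := -θ h̄^{-(1+θ)}. Let Ψ ∈ C²(Ω) ∩ C¹(cl(Ω)) be a classical solution of ∇·(a∇Ψ) = bΨ + cΨ^{-θ} in Ω with Ψ = h on ∂Ω and 0 < Ψ ≤ h̄ on cl(Ω). Let Ψ₀ ∈ C²(Ω) ∩ C¹(cl(Ω)) satisfy -∇·(a∇Ψ₀) + (b + cν)Ψ₀ = 0 in Ω with Ψ₀ = h on ∂Ω and 0 ≤ Ψ₀ ≤ h̄ on cl(Ω), and for each n ≥ 1 let Ψ_n ∈ C²(Ω) ∩ C¹(cl(Ω)) with Ψ_n ≥ 0 satisfy -∇·(a∇Ψ_n) + (b + cν)Ψ_n = -c(Ψ_{n-1}^{-θ} - νΨ_{n-1}) in Ω with Ψ_n = h on ∂Ω. Then for every n ≥ 0 one has Ψ_n ≤ Ψ_{n+1} ≤ Ψ in Ω; consequently, for every x ∈ Ω the sequence (Ψ_n(x)) is nondecreasing, bounded above by Ψ(x), and convergent. -/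

import Mathlib

/-!
Expand `∇·(a∇u) = a Δu + ⟪∇a, ∇u⟫`. This is nonpositive at a local maximum of `u`, whereas for
`u = exp ⟪p, ·⟫` it is `exp ⟪p, ·⟫ (a ‖p‖² + ⟪∇a, p⟫)`, positive for large `‖p‖` because
`∇ log a` is bounded. Adding a small multiple of this exponential gives the weak maximum principle
for `∇·(a∇·)`, hence the comparison principle for `-∇·(a∇·) + k` with `k ≥ 0`.

Adding `c ν Ψ` to both sides turns the reaction term into `f z = c (ν z - z ^ p)`, `p = -θ`, which
vanishes at `0` and is nondecreasing on `[0, M]`, `M = h̄`, because `ν = p M ^ (p - 1)` bounds the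
derivative of `z ^ p` there. So `Ψ₀`, which solves the equation with `f` replaced by `0`, is a
subsolution between `0` and `Ψ`, and each step of the iteration preserves the ordering.
-/

open Real Set MeasureTheory Filter Topology

/-- Divergence-form operator `∇·(a∇u)(x) = ∑ i ∂_i (a ∂_i u)(x)`. -/
noncomputable def divA {d : ℕ} (a u : EuclideanSpace ℝ (Fin d) → ℝ)
    (x : EuclideanSpace ℝ (Fin d)) : ℝ :=
  ∑ i : Fin d,
    fderiv ℝ (fun y => a y * fderiv ℝ u y (EuclideanSpace.single i (1 : ℝ))) x
      (EuclideanSpace.single i (1 : ℝ))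

/-- Squared Euclidean norm of the gradient `|∇u|²(x)`. -/
noncomputable def gradSq {d : ℕ} (u : EuclideanSpace ℝ (Fin d) → ℝ)
    (x : EuclideanSpace ℝ (Fin d)) : ℝ :=
  ∑ i : Fin d, (fderiv ℝ u x (EuclideanSpace.single i (1 : ℝ))) ^ 2

open scoped Gradient InnerProductSpace Laplacian

theorem deriv_deriv_nonpos_of_isLocalMax {f : ℝ → ℝ} {t : ℝ} (hf : ContinuousAt f t)
    (hmax : IsLocalMax f t) : deriv (deriv f) t ≤ 0 := by
  by_contra! hpos
  have hmin : IsLocalMin f t := isLocalMin_of_deriv_deriv_pos hpos hmax.deriv_eq_zero hf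
  have hconst : f =ᶠ[𝓝 t] fun _ => f t := by
    filter_upwards [hmax, hmin] with s using le_antisymm
  have hzero : deriv (deriv f) t = 0 := by simpa using hconst.deriv.deriv_eq
  exact hpos.ne' hzero

theorem fderiv_fderiv_apply_self_nonpos_of_isLocalMax {E : Type*} [NormedAddCommGroup E]
    [NormedSpace ℝ E] {u : E → ℝ} {x : E} (hu : ContDiffAt ℝ 2 u x) (hmax : IsLocalMax u x)
    (v : E) : fderiv ℝ (fderiv ℝ u) x v v ≤ 0 := by
  let γ : ℝ → E := fun t => x + t • v
  have hγ0 : γ 0 = x := by simp [γ]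
  have hγ (t : ℝ) : HasDerivAt γ v t := by
    simpa [γ] using ((hasDerivAt_id t).smul_const v).const_add x
  have hdu : HasFDerivAt (fderiv ℝ u) (fderiv ℝ (fderiv ℝ u) x) (γ 0) :=
    hγ0 ▸ ((hu.fderiv_right (m := 1) (by norm_num)).differentiableAt (by simp)).hasFDerivAt
  have hderiv : deriv (u ∘ γ) =ᶠ[𝓝 0] fun t => fderiv ℝ u (γ t) v := by
    have hdiff : ∀ᶠ y in 𝓝 (γ 0), DifferentiableAt ℝ u y :=
      hγ0 ▸ (hu.eventually (by simp)).mono fun y hy => hy.differentiableAt (by simp)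
    filter_upwards [(hγ 0).continuousAt.eventually hdiff] with t ht
    exact (ht.hasFDerivAt.comp_hasDerivAt t (hγ t)).deriv
  have hderiv2 : HasDerivAt (fun t => fderiv ℝ u (γ t) v) (fderiv ℝ (fderiv ℝ u) x v v) 0 :=
    (ContinuousLinearMap.apply ℝ ℝ v).hasFDerivAt.comp_hasDerivAt 0
      (hdu.comp_hasDerivAt 0 (hγ 0))
  rw [← hderiv2.deriv, ← hderiv.deriv_eq]
  exact deriv_deriv_nonpos_of_isLocalMax
    (ContinuousAt.comp (hγ0.symm ▸ hu.continuousAt) (hγ 0).continuousAt)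
    (IsLocalMax.comp_continuous (hγ0.symm ▸ hmax) (hγ 0).continuousAt)

section InnerProductSpace

variable {E : Type*} [NormedAddCommGroup E] [InnerProductSpace ℝ E]

theorem hasFDerivAt_exp_inner (p x : E) :
    HasFDerivAt (fun y => exp ⟪p, y⟫_ℝ) (exp ⟪p, x⟫_ℝ • innerSL ℝ p) x :=
  (innerSL ℝ p).hasFDerivAt.exp

theorem contDiff_exp_inner (p : E) {n : WithTop ℕ∞} : ContDiff ℝ n fun y => exp ⟪p, y⟫_ℝ :=
  (innerSL ℝ p).contDiff.exp

theorem gradient_exp_inner [CompleteSpace E] (p x : E) :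
    ∇ (fun y => exp ⟪p, y⟫_ℝ) x = exp ⟪p, x⟫_ℝ • p := by
  refine ext_inner_right ℝ fun v => ?_
  rw [inner_gradient_left, (hasFDerivAt_exp_inner p x).fderiv]
  simp [real_inner_smul_left]

/-- `a` is positive and differentiable on `s` with `|∇ log a|` bounded there. The bound,
stated without division as `‖∇a‖ ≤ C a`, makes steep exponentials strict subsolutions of
`∇·(a∇u) = 0`. -/
structure HasBoundedLogGradientOn [CompleteSpace E] (a : E → ℝ) (s : Set E) : Prop where
  pos : ∀ x ∈ s, 0 < a x
  differentiableAt : ∀ x ∈ s, DifferentiableAt ℝ a x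
  exists_norm_gradient_le : ∃ C, ∀ x ∈ s, ‖∇ a x‖ ≤ C * a x

variable [FiniteDimensional ℝ E]

theorem laplacian_eq_sum_fderiv_fderiv {ι : Type*} [Fintype ι] (b : OrthonormalBasis ι ℝ E)
    (u : E → ℝ) (x : E) : Δ u x = ∑ i, fderiv ℝ (fderiv ℝ u) x (b i) (b i) := by
  simp [InnerProductSpace.laplacian_eq_iteratedFDeriv_orthonormalBasis u b,
    iteratedFDeriv_two_apply]

theorem laplacian_nonpos_of_isLocalMax {u : E → ℝ} {x : E} (hu : ContDiffAt ℝ 2 u x)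
    (hmax : IsLocalMax u x) : Δ u x ≤ 0 := by
  rw [laplacian_eq_sum_fderiv_fderiv (stdOrthonormalBasis ℝ E)]
  exact Finset.sum_nonpos fun i _ => fderiv_fderiv_apply_self_nonpos_of_isLocalMax hu hmax _

theorem laplacian_exp_inner (p x : E) :
    Δ (fun y => exp ⟪p, y⟫_ℝ) x = exp ⟪p, x⟫_ℝ * ‖p‖ ^ 2 := by
  have hfderiv : fderiv ℝ (fun y => exp ⟪p, y⟫_ℝ) = fun y => exp ⟪p, y⟫_ℝ • innerSL ℝ p :=
    funext fun y => (hasFDerivAt_exp_inner p y).fderiv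
  have hfderiv2 (v : E) : fderiv ℝ (fderiv ℝ fun y => exp ⟪p, y⟫_ℝ) x v v
      = exp ⟪p, x⟫_ℝ * ⟪p, v⟫_ℝ ^ 2 := by
    rw [hfderiv, ((hasFDerivAt_exp_inner p x).smul_const (innerSL ℝ p)).fderiv]
    simp only [ContinuousLinearMap.smulRight_apply, smul_apply, coe_innerSL_apply, smul_eq_mul]
    ring
  simp only [laplacian_eq_sum_fderiv_fderiv (stdOrthonormalBasis ℝ E), hfderiv2, ← Finset.mul_sum,
    OrthonormalBasis.sum_sq_inner_left]

theorem hasBoundedLogGradientOn_of_contDiffOn {s U : Set E} (hs : Bornology.IsBounded s)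
    (hU : IsOpen U) (hsU : closure s ⊆ U) {a : E → ℝ} (ha : ContDiffOn ℝ 1 a U)
    {a₀ : ℝ} (ha₀ : 0 < a₀) (hle : ∀ x ∈ s, a₀ ≤ a x) : HasBoundedLogGradientOn a s where
  pos x hx := ha₀.trans_le (hle x hx)
  differentiableAt x hx :=
    (ha.contDiffAt (hU.mem_nhds (hsU (subset_closure hx)))).differentiableAt one_ne_zero
  exists_norm_gradient_le := by
    obtain ⟨B, hB⟩ := hs.isCompact_closure.exists_bound_of_continuousOn
      ((ha.continuousOn_fderiv_of_isOpen hU le_rfl).mono hsU)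
    refine ⟨B / a₀, fun x hx => ?_⟩
    have hBx : ‖fderiv ℝ a x‖ ≤ B := hB x (subset_closure hx)
    have hB0 : 0 ≤ B := (norm_nonneg _).trans hBx
    calc ‖∇ a x‖ = ‖fderiv ℝ a x‖ := by simp [gradient]
      _ ≤ B := hBx
      _ = B / a₀ * a₀ := (div_mul_cancel₀ B ha₀.ne').symm
      _ ≤ B / a₀ * a x := by gcongr; exact hle x hx

end InnerProductSpace

section DivergenceForm

variable {d : ℕ} {a u v : EuclideanSpace ℝ (Fin d) → ℝ} {x : EuclideanSpace ℝ (Fin d)}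

theorem divA_eq_mul_laplacian_add_inner_gradient (ha : DifferentiableAt ℝ a x)
    (hu : ContDiffAt ℝ 2 u x) : divA a u x = a x * Δ u x + ⟪∇ a x, ∇ u x⟫_ℝ := by
  let e := EuclideanSpace.basisFun (Fin d) ℝ
  have hdu : DifferentiableAt ℝ (fderiv ℝ u) x :=
    (hu.fderiv_right (m := 1) (by norm_num)).differentiableAt (by simp)
  have hflux (v : EuclideanSpace ℝ (Fin d)) : fderiv ℝ (fun y => a y * fderiv ℝ u y v) x v
      = a x * fderiv ℝ (fderiv ℝ u) x v v + fderiv ℝ a x v * fderiv ℝ u x v := by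
    rw [fderiv_fun_mul ha (hdu.clm_apply (differentiableAt_const v)),
      fderiv_clm_apply hdu (differentiableAt_const v)]
    simp only [fderiv_fun_const, Pi.zero_apply, ContinuousLinearMap.comp_zero, zero_add, add_apply,
      smul_apply, ContinuousLinearMap.flip_apply, smul_eq_mul]
    ring
  have hgrad : ⟪∇ a x, ∇ u x⟫_ℝ = ∑ i, fderiv ℝ a x (e i) * fderiv ℝ u x (e i) := by
    rw [← e.sum_inner_mul_inner]
    refine Finset.sum_congr rfl fun i _ => ?_
    rw [inner_gradient_left, real_inner_comm, inner_gradient_left]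
  rw [hgrad, laplacian_eq_sum_fderiv_fderiv e, Finset.mul_sum, ← Finset.sum_add_distrib]
  simp [divA, hflux, e]

theorem divA_zero : divA a 0 x = 0 := by
  simp [divA]

theorem divA_add (ha : DifferentiableAt ℝ a x) (hu : ContDiffAt ℝ 2 u x)
    (hv : ContDiffAt ℝ 2 v x) : divA a (u + v) x = divA a u x + divA a v x := by
  have hgrad : ∇ (u + v) x = ∇ u x + ∇ v x := by
    simp [gradient, fderiv_add (hu.differentiableAt two_ne_zero) (hv.differentiableAt two_ne_zero)]
  rw [divA_eq_mul_laplacian_add_inner_gradient (u := u + v) ha (hu.add hv),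
    divA_eq_mul_laplacian_add_inner_gradient ha hu, divA_eq_mul_laplacian_add_inner_gradient ha hv,
    hu.laplacian_add hv, hgrad, inner_add_right]
  ring

theorem divA_const_smul (ha : DifferentiableAt ℝ a x) (hu : ContDiffAt ℝ 2 u x) (r : ℝ) :
    divA a (r • u) x = r * divA a u x := by
  have hgrad : ∇ (r • u) x = r • ∇ u x := by
    simp [gradient, fderiv_const_smul (hu.differentiableAt two_ne_zero)]
  rw [divA_eq_mul_laplacian_add_inner_gradient (u := r • u) ha (hu.const_smul r),
    divA_eq_mul_laplacian_add_inner_gradient ha hu,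
    InnerProductSpace.laplacian_smul r hu, hgrad, real_inner_smul_right, smul_eq_mul]
  ring

theorem divA_sub (ha : DifferentiableAt ℝ a x) (hu : ContDiffAt ℝ 2 u x)
    (hv : ContDiffAt ℝ 2 v x) : divA a (u - v) x = divA a u x - divA a v x := by
  rw [sub_eq_add_neg, ← neg_one_smul ℝ v,
    divA_add (v := (-1 : ℝ) • v) ha hu (hv.const_smul (-1 : ℝ)), divA_const_smul ha hv]
  ring

theorem divA_nonpos_of_isLocalMax (ha : DifferentiableAt ℝ a x) (hax : 0 ≤ a x)
    (hu : ContDiffAt ℝ 2 u x) (hmax : IsLocalMax u x) : divA a u x ≤ 0 := by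
  have hgrad : ∇ u x = 0 := by simp [gradient, hmax.fderiv_eq_zero]
  rw [divA_eq_mul_laplacian_add_inner_gradient ha hu, hgrad, inner_zero_right, add_zero]
  exact mul_nonpos_of_nonneg_of_nonpos hax (laplacian_nonpos_of_isLocalMax hu hmax)

theorem divA_exp_inner (ha : DifferentiableAt ℝ a x) (p : EuclideanSpace ℝ (Fin d)) :
    divA a (fun y => exp ⟪p, y⟫_ℝ) x = exp ⟪p, x⟫_ℝ * (a x * ‖p‖ ^ 2 + ⟪∇ a x, p⟫_ℝ) := by
  rw [divA_eq_mul_laplacian_add_inner_gradient ha (contDiff_exp_inner p).contDiffAt,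
    laplacian_exp_inner, gradient_exp_inner, real_inner_smul_right]
  ring

variable {Ω : Set (EuclideanSpace ℝ (Fin d))}

theorem HasBoundedLogGradientOn.exists_divA_pos [NeZero d] (ha : HasBoundedLogGradientOn a Ω) :
    ∃ w, ContDiff ℝ 2 w ∧ ∀ x ∈ Ω, 0 < divA a w x := by
  obtain ⟨C, hC⟩ := ha.exists_norm_gradient_le
  obtain ⟨p, hp⟩ : ∃ p : EuclideanSpace ℝ (Fin d), ‖p‖ = |C| + 1 :=
    exists_norm_eq _ (by positivity)
  have hCp : C < ‖p‖ := hp ▸ (le_abs_self C).trans_lt (lt_add_one _)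
  have hp0 : 0 < ‖p‖ := hp ▸ by positivity
  refine ⟨fun y => exp ⟪p, y⟫_ℝ, contDiff_exp_inner p, fun x hx => ?_⟩
  rw [divA_exp_inner (ha.differentiableAt x hx)]
  refine mul_pos (exp_pos _) ?_
  calc 0 < a x * ‖p‖ * (‖p‖ - C) := mul_pos (mul_pos (ha.pos x hx) hp0) (sub_pos.2 hCp)
    _ = a x * ‖p‖ ^ 2 - C * a x * ‖p‖ := by ring
    _ ≤ a x * ‖p‖ ^ 2 - ‖∇ a x‖ * ‖p‖ := by gcongr; exact hC x hx
    _ ≤ a x * ‖p‖ ^ 2 + ⟪∇ a x, p⟫_ℝ := by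
      linarith [neg_le_of_abs_le (abs_real_inner_le_norm (∇ a x) p)]

variable [NeZero d]

theorem nonpos_of_divA_nonneg (hΩo : IsOpen Ω) (hΩb : Bornology.IsBounded Ω)
    (ha : HasBoundedLogGradientOn a Ω) (hu : ContDiffOn ℝ 2 u Ω)
    (huc : ContinuousOn u (closure Ω)) (hbd : ∀ x ∈ frontier Ω, u x ≤ 0)
    (hdiv : ∀ x ∈ Ω, 0 < u x → 0 ≤ divA a u x) : ∀ x ∈ Ω, u x ≤ 0 := by
  intro x₁ hx₁
  by_contra! hux₁
  obtain ⟨w, hw, hdivw⟩ := ha.exists_divA_pos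
  have hK : IsCompact (closure Ω) := hΩb.isCompact_closure
  obtain ⟨B, hB⟩ := hK.exists_bound_of_continuousOn hw.continuous.continuousOn
  have hB0 : 0 ≤ B := (norm_nonneg _).trans (hB x₁ (subset_closure hx₁))
  -- `ε • w` oscillates by less than `u x₁`, so `u + ε • w` can only peak where `0 < u`.
  obtain ⟨ε, hε, hεB⟩ : ∃ ε > 0, ε * (2 * B + 1) = u x₁ :=
    ⟨u x₁ / (2 * B + 1), by positivity, div_mul_cancel₀ _ (by positivity)⟩
  obtain ⟨x, hxK, hmax⟩ := hK.exists_isMaxOn ⟨x₁, subset_closure hx₁⟩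
    (huc.add (hw.continuous.continuousOn.const_smul ε))
  have hux : 0 < u x := by
    have hle : u x₁ + ε * w x₁ ≤ u x + ε * w x := hmax (subset_closure hx₁)
    have hwx₁ : -B ≤ w x₁ := neg_le_of_abs_le (hB x₁ (subset_closure hx₁))
    have hwx : w x ≤ B := le_of_abs_le (hB x hxK)
    nlinarith
  have hx : x ∈ Ω := by
    by_contra hxΩ
    exact hux.not_ge (hbd x ⟨hxK, by rwa [hΩo.interior_eq]⟩)
  have hux2 : ContDiffAt ℝ 2 u x := hu.contDiffAt (hΩo.mem_nhds hx)
  have hεw : ContDiffAt ℝ 2 (ε • w) x := contDiffAt_const.smul hw.contDiffAt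
  have hadiff := ha.differentiableAt x hx
  have hnonpos : divA a (u + ε • w) x ≤ 0 :=
    divA_nonpos_of_isLocalMax hadiff (ha.pos x hx).le (hux2.add hεw)
      (hmax.isLocalMax (mem_of_superset (hΩo.mem_nhds hx) subset_closure))
  rw [divA_add hadiff hux2 hεw, divA_const_smul hadiff hw.contDiffAt] at hnonpos
  linarith [hdiv x hx hux, mul_pos hε (hdivw x hx)]

variable {k : EuclideanSpace ℝ (Fin d) → ℝ}

theorem le_of_divA_sub_mul_le (hΩo : IsOpen Ω) (hΩb : Bornology.IsBounded Ω)
    (ha : HasBoundedLogGradientOn a Ω) (hk : ∀ x ∈ Ω, 0 ≤ k x)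
    (hu : ContDiffOn ℝ 2 u Ω) (huc : ContinuousOn u (closure Ω))
    (hv : ContDiffOn ℝ 2 v Ω) (hvc : ContinuousOn v (closure Ω))
    (hbd : ∀ x ∈ frontier Ω, u x ≤ v x)
    (hdiv : ∀ x ∈ Ω, divA a v x - k x * v x ≤ divA a u x - k x * u x) :
    ∀ x ∈ Ω, u x ≤ v x := by
  have hsub : ∀ x ∈ Ω, (u - v) x ≤ 0 := by
    refine nonpos_of_divA_nonneg hΩo hΩb ha (hu.sub hv) (huc.sub hvc)
      (fun x hx => sub_nonpos.2 (hbd x hx)) fun x hx hpos => ?_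
    have hkx : 0 ≤ k x * (u x - v x) := mul_nonneg (hk x hx) hpos.le
    rw [divA_sub (ha.differentiableAt x hx) (hu.contDiffAt (hΩo.mem_nhds hx))
      (hv.contDiffAt (hΩo.mem_nhds hx))]
    linarith [hdiv x hx]
  exact fun x hx => sub_nonpos.1 (hsub x hx)

theorem nonneg_of_divA_sub_mul_nonpos (hΩo : IsOpen Ω) (hΩb : Bornology.IsBounded Ω)
    (ha : HasBoundedLogGradientOn a Ω) (hk : ∀ x ∈ Ω, 0 ≤ k x)
    (hu : ContDiffOn ℝ 2 u Ω) (huc : ContinuousOn u (closure Ω))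
    (hbd : ∀ x ∈ frontier Ω, 0 ≤ u x) (hdiv : ∀ x ∈ Ω, divA a u x - k x * u x ≤ 0) :
    ∀ x ∈ Ω, 0 ≤ u x :=
  le_of_divA_sub_mul_le (u := 0) hΩo hΩb ha hk contDiffOn_const continuousOn_const hu huc hbd
    fun x hx => by simpa [divA_zero] using hdiv x hx

theorem monotone_iteration (hΩo : IsOpen Ω) (hΩb : Bornology.IsBounded Ω)
    (ha : HasBoundedLogGradientOn a Ω) (hk : ∀ x ∈ Ω, 0 ≤ k x)
    {f : EuclideanSpace ℝ (Fin d) → ℝ → ℝ} {w : ℕ → EuclideanSpace ℝ (Fin d) → ℝ}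
    (hf : ∀ x ∈ Ω, MonotoneOn (f x) (Icc (w 0 x) (v x)))
    (hv : ContDiffOn ℝ 2 v Ω) (hvc : ContinuousOn v (closure Ω))
    (hw : ∀ n, ContDiffOn ℝ 2 (w n) Ω) (hwc : ∀ n, ContinuousOn (w n) (closure Ω))
    (hsuper : ∀ x ∈ Ω, divA a v x - k x * v x ≤ -f x (v x))
    (hsub : ∀ x ∈ Ω, -f x (w 0 x) ≤ divA a (w 0) x - k x * w 0 x)
    (hle : ∀ x ∈ Ω, w 0 x ≤ v x)
    (hiter : ∀ n, ∀ x ∈ Ω, divA a (w (n + 1)) x - k x * w (n + 1) x = -f x (w n x))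
    (hbd_succ : ∀ n, ∀ x ∈ frontier Ω, w n x ≤ w (n + 1) x)
    (hbd_le : ∀ n, ∀ x ∈ frontier Ω, w n x ≤ v x) (n : ℕ) :
    ∀ x ∈ Ω, w n x ≤ w (n + 1) x ∧ w (n + 1) x ≤ v x := by
  have le_succ (n : ℕ)
      (h : ∀ x ∈ Ω, -f x (w n x) ≤ divA a (w n) x - k x * w n x) : ∀ x ∈ Ω, w n x ≤ w (n + 1) x :=
    le_of_divA_sub_mul_le hΩo hΩb ha hk (hw n) (hwc n) (hw (n + 1)) (hwc (n + 1)) (hbd_succ n)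
      fun x hx => (hiter n x hx).trans_le (h x hx)
  have succ_le (n : ℕ) (h : ∀ x ∈ Ω, f x (w n x) ≤ f x (v x)) : ∀ x ∈ Ω, w (n + 1) x ≤ v x :=
    le_of_divA_sub_mul_le hΩo hΩb ha hk (hw (n + 1)) (hwc (n + 1)) hv hvc (hbd_le (n + 1))
      fun x hx => (hsuper x hx).trans ((neg_le_neg (h x hx)).trans_eq (hiter n x hx).symm)
  suffices h : ∀ x ∈ Ω, w 0 x ≤ w n x ∧ w n x ≤ w (n + 1) x ∧ w (n + 1) x ≤ v x from
    fun x hx => (h x hx).2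
  induction n with
  | zero =>
    have hfle : ∀ x ∈ Ω, f x (w 0 x) ≤ f x (v x) := fun x hx =>
      hf x hx ⟨le_rfl, hle x hx⟩ ⟨hle x hx, le_rfl⟩ (hle x hx)
    exact fun x hx => ⟨le_rfl, le_succ 0 hsub x hx, succ_le 0 hfle x hx⟩
  | succ n ih =>
    have hmem : ∀ x ∈ Ω, w (n + 1) x ∈ Icc (w 0 x) (v x) := fun x hx =>
      ⟨(ih x hx).1.trans (ih x hx).2.1, (ih x hx).2.2⟩
    have hsub_succ : ∀ x ∈ Ω, -f x (w (n + 1) x) ≤ divA a (w (n + 1)) x - k x * w (n + 1) x := by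
      intro x hx
      obtain ⟨h0, hn, hv⟩ := ih x hx
      rw [hiter n x hx]
      exact neg_le_neg (hf x hx ⟨h0, hn.trans hv⟩ (hmem x hx) hn)
    have hfle : ∀ x ∈ Ω, f x (w (n + 1) x) ≤ f x (v x) := fun x hx =>
      hf x hx (hmem x hx) ⟨hle x hx, le_rfl⟩ (hmem x hx).2
    exact fun x hx => ⟨(hmem x hx).1, le_succ (n + 1) hsub_succ x hx, succ_le (n + 1) hfle x hx⟩

theorem monotone_iteration_of_homogeneous (hΩo : IsOpen Ω) (hΩb : Bornology.IsBounded Ω)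
    (ha : HasBoundedLogGradientOn a Ω) (hk : ∀ x ∈ Ω, 0 ≤ k x)
    {f : EuclideanSpace ℝ (Fin d) → ℝ → ℝ} {w : ℕ → EuclideanSpace ℝ (Fin d) → ℝ}
    (hf : ∀ x ∈ Ω, MonotoneOn (f x) (Icc 0 (v x))) (hf_zero : ∀ x ∈ Ω, f x 0 = 0)
    (hv : ContDiffOn ℝ 2 v Ω) (hvc : ContinuousOn v (closure Ω))
    (hw : ∀ n, ContDiffOn ℝ 2 (w n) Ω) (hwc : ∀ n, ContinuousOn (w n) (closure Ω))
    (hv_nonneg : ∀ x ∈ Ω, 0 ≤ v x)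
    (hsuper : ∀ x ∈ Ω, divA a v x - k x * v x ≤ -f x (v x))
    (hzero : ∀ x ∈ Ω, divA a (w 0) x - k x * w 0 x = 0)
    (hiter : ∀ n, ∀ x ∈ Ω, divA a (w (n + 1)) x - k x * w (n + 1) x = -f x (w n x))
    (hbd_nonneg : ∀ x ∈ frontier Ω, 0 ≤ w 0 x)
    (hbd_succ : ∀ n, ∀ x ∈ frontier Ω, w n x ≤ w (n + 1) x)
    (hbd_le : ∀ n, ∀ x ∈ frontier Ω, w n x ≤ v x) (n : ℕ) :
    ∀ x ∈ Ω, w n x ≤ w (n + 1) x ∧ w (n + 1) x ≤ v x := by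
  have hf_nonneg : ∀ x ∈ Ω, ∀ z ∈ Icc 0 (v x), 0 ≤ f x z := fun x hx z hz =>
    (hf_zero x hx).symm.trans_le (hf x hx ⟨le_rfl, hv_nonneg x hx⟩ hz hz.1)
  have hw0_nonneg : ∀ x ∈ Ω, 0 ≤ w 0 x :=
    nonneg_of_divA_sub_mul_nonpos hΩo hΩb ha hk (hw 0) (hwc 0) hbd_nonneg
      fun x hx => (hzero x hx).le
  have hw0_le : ∀ x ∈ Ω, w 0 x ≤ v x :=
    le_of_divA_sub_mul_le hΩo hΩb ha hk (hw 0) (hwc 0) hv hvc (hbd_le 0) fun x hx => by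
      linarith [hzero x hx, hsuper x hx, hf_nonneg x hx (v x) ⟨hv_nonneg x hx, le_rfl⟩]
  have hsub : ∀ x ∈ Ω, -f x (w 0 x) ≤ divA a (w 0) x - k x * w 0 x := fun x hx => by
    linarith [hzero x hx, hf_nonneg x hx (w 0 x) ⟨hw0_nonneg x hx, hw0_le x hx⟩]
  exact monotone_iteration hΩo hΩb ha hk
    (fun x hx => (hf x hx).mono (Icc_subset_Icc_left (hw0_nonneg x hx)))
    hv hvc hw hwc hsuper hsub hw0_le hiter hbd_succ hbd_le n

end DivergenceForm

theorem monotoneOn_mul_sub_rpow {p M ν : ℝ} (hp : 1 ≤ p) (hν : p * M ^ (p - 1) ≤ ν) :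
    MonotoneOn (fun z : ℝ => ν * z - z ^ p) (Icc 0 M) := by
  have hderiv (z : ℝ) : HasDerivAt (fun z : ℝ => ν * z - z ^ p) (ν - p * z ^ (p - 1)) z := by
    simpa using ((hasDerivAt_id z).const_mul ν).fun_sub (hasDerivAt_rpow_const (.inr hp))
  refine monotoneOn_of_hasDerivWithinAt_nonneg (convex_Icc 0 M)
    (fun z _ => (hderiv z).continuousAt.continuousWithinAt)
    (fun z _ => (hderiv z).hasDerivWithinAt) fun z hz => ?_
  rw [interior_Icc] at hz
  have hpow : z ^ (p - 1) ≤ M ^ (p - 1) := rpow_le_rpow hz.1.le hz.2.le (sub_nonneg.2 hp)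
  exact sub_nonneg.2 (hν.trans' (by gcongr))

theorem stmt16_general {d : ℕ} [NeZero d] {Ω : Set (EuclideanSpace ℝ (Fin d))}
    (hΩo : IsOpen Ω) (hΩb : Bornology.IsBounded Ω) {a b c : EuclideanSpace ℝ (Fin d) → ℝ}
    (ha : HasBoundedLogGradientOn a Ω) (hb : ∀ x ∈ Ω, 0 ≤ b x) (hc : ∀ x ∈ Ω, 0 ≤ c x)
    {p M ν : ℝ} (hp : 1 ≤ p) (hν : p * M ^ (p - 1) ≤ ν)
    {h : EuclideanSpace ℝ (Fin d) → ℝ} (hh : ∀ x ∈ frontier Ω, 0 ≤ h x)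
    {Ψ : EuclideanSpace ℝ (Fin d) → ℝ}
    (hΨ : ContDiffOn ℝ 2 Ψ Ω) (hΨc : ContinuousOn Ψ (closure Ω))
    (hΨmem : ∀ x ∈ Ω, Ψ x ∈ Icc 0 M)
    (hΨsuper : ∀ x ∈ Ω, divA a Ψ x ≤ b x * Ψ x + c x * Ψ x ^ p)
    (hΨbd : ∀ x ∈ frontier Ω, h x ≤ Ψ x)
    {w : ℕ → EuclideanSpace ℝ (Fin d) → ℝ}
    (hw : ∀ n, ContDiffOn ℝ 2 (w n) Ω) (hwc : ∀ n, ContinuousOn (w n) (closure Ω))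
    (hw_zero : ∀ x ∈ Ω, -divA a (w 0) x + (b x + c x * ν) * w 0 x = 0)
    (hw_succ : ∀ n, ∀ x ∈ Ω, -divA a (w (n + 1)) x + (b x + c x * ν) * w (n + 1) x
      = -c x * (w n x ^ p - ν * w n x))
    (hw_bd : ∀ n, ∀ x ∈ frontier Ω, w n x = h x) :
    (∀ n, ∀ x ∈ Ω, w n x ≤ w (n + 1) x ∧ w (n + 1) x ≤ Ψ x) ∧
      ∀ x ∈ Ω, ∃ L ≤ Ψ x, Tendsto (fun n => w n x) atTop (𝓝 L) := by
  let f : EuclideanSpace ℝ (Fin d) → ℝ → ℝ := fun x z => c x * (ν * z - z ^ p)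
  have hk : ∀ x ∈ Ω, 0 ≤ b x + c x * ν := by
    intro x hx
    have hM : 0 ≤ M := (hΨmem x hx).1.trans (hΨmem x hx).2
    have hν0 : 0 ≤ ν := (mul_nonneg (by linarith) (rpow_nonneg hM _)).trans hν
    exact add_nonneg (hb x hx) (mul_nonneg (hc x hx) hν0)
  have hf : ∀ x ∈ Ω, MonotoneOn (f x) (Icc 0 (Ψ x)) := fun x hx =>
    (monotone_mul_left_of_nonneg (hc x hx)).comp_monotoneOn
      ((monotoneOn_mul_sub_rpow hp hν).mono (Icc_subset_Icc_right (hΨmem x hx).2))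
  have hf_zero : ∀ x ∈ Ω, f x 0 = 0 := fun x _ => by
    simp [f, zero_rpow (show p ≠ 0 by linarith)]
  have hchain : ∀ n, ∀ x ∈ Ω, w n x ≤ w (n + 1) x ∧ w (n + 1) x ≤ Ψ x :=
    monotone_iteration_of_homogeneous hΩo hΩb ha hk hf hf_zero hΨ hΨc hw hwc
      (fun x hx => (hΨmem x hx).1)
      (fun x hx => by simp only [f]; linarith [hΨsuper x hx])
      (fun x hx => by linarith [hw_zero x hx])
      (fun n x hx => by simp only [f]; linarith [hw_succ n x hx])
      (fun x hx => (hh x hx).trans_eq (hw_bd 0 x hx).symm)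
      (fun n x hx => ((hw_bd n x hx).trans (hw_bd (n + 1) x hx).symm).le)
      (fun n x hx => (hw_bd n x hx).trans_le (hΨbd x hx))
  refine ⟨hchain, fun x hx => ?_⟩
  have hmono : Monotone fun n => w n x := monotone_nat_of_le_succ fun n => (hchain n x hx).1
  have hle (n : ℕ) : w n x ≤ Ψ x := (hchain n x hx).1.trans (hchain n x hx).2
  exact ⟨⨆ n, w n x, ciSup_le hle, tendsto_atTop_ciSup hmono ⟨Ψ x, forall_mem_range.2 hle⟩⟩

theorem stmt16 {d : ℕ} (hd : 1 ≤ d) (Ω U : Set (EuclideanSpace ℝ (Fin d)))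
    (hΩo : IsOpen Ω) (hΩb : Bornology.IsBounded Ω)
    (hU : IsOpen U) (hUΩ : closure Ω ⊆ U)
    (a b c : EuclideanSpace ℝ (Fin d) → ℝ)
    (ha : ContDiffOn ℝ 1 a U) (a₀ : ℝ) (ha₀ : 0 < a₀) (halb : ∀ x ∈ Ω, a₀ ≤ a x)
    (hbcont : ContinuousOn b (closure Ω)) (hccont : ContinuousOn c (closure Ω))
    (θ : ℝ) (hθ : θ < -1)
    (hbnn : ∀ x ∈ Ω, 0 ≤ b x) (hcnn : ∀ x ∈ Ω, 0 ≤ c x)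
    (h : EuclideanSpace ℝ (Fin d) → ℝ) (hhpos : ∀ x ∈ frontier Ω, 0 < h x)
    (hbar : ℝ) (hhbar : IsLUB (h '' frontier Ω) hbar)
    (ν : ℝ) (hν : ν = -θ * hbar ^ (-(1 + θ)))
    (Ψ : EuclideanSpace ℝ (Fin d) → ℝ)
    (hΨ2 : ContDiffOn ℝ 2 Ψ Ω) (hΨ1 : ContDiffOn ℝ 1 Ψ (closure Ω))
    (hΨpos : ∀ x ∈ closure Ω, 0 < Ψ x) (hΨub : ∀ x ∈ closure Ω, Ψ x ≤ hbar)
    (hΨeq : ∀ x ∈ Ω, divA a Ψ x = b x * Ψ x + c x * Ψ x ^ (-θ))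
    (hΨbd : ∀ x ∈ frontier Ω, Ψ x = h x)
    (Ψseq : ℕ → EuclideanSpace ℝ (Fin d) → ℝ)
    (hseq2 : ∀ n, ContDiffOn ℝ 2 (Ψseq n) Ω)
    (hseq1 : ∀ n, ContDiffOn ℝ 1 (Ψseq n) (closure Ω))
    (hseq0 : ∀ x ∈ Ω, -divA a (Ψseq 0) x + (b x + c x * ν) * Ψseq 0 x = 0)
    (hseq0bounds : ∀ x ∈ closure Ω, 0 ≤ Ψseq 0 x ∧ Ψseq 0 x ≤ hbar)
    (hseqnn : ∀ n : ℕ, ∀ x ∈ closure Ω, 0 ≤ Ψseq (n + 1) x)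
    (hseqn : ∀ n : ℕ, ∀ x ∈ Ω,
      -divA a (Ψseq (n + 1)) x + (b x + c x * ν) * Ψseq (n + 1) x
        = -c x * ((Ψseq n x) ^ (-θ) - ν * Ψseq n x))
    (hseqbd : ∀ n, ∀ x ∈ frontier Ω, Ψseq n x = h x) :
    (∀ n : ℕ, ∀ x ∈ Ω, Ψseq n x ≤ Ψseq (n + 1) x ∧ Ψseq (n + 1) x ≤ Ψ x) ∧
      ∀ x ∈ Ω, ∃ L : ℝ, L ≤ Ψ x ∧
        Filter.Tendsto (fun n => Ψseq n x) Filter.atTop (nhds L) := by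
  have : NeZero d := NeZero.of_pos hd
  have hν' : -θ * hbar ^ (-θ - 1) ≤ ν := by rw [hν, neg_add', neg_sub_comm]
  exact stmt16_general hΩo hΩb (hasBoundedLogGradientOn_of_contDiffOn hΩb hU hUΩ ha ha₀ halb)
    hbnn hcnn (by linarith) hν' (fun x hx => (hhpos x hx).le)
    hΨ2 hΨ1.continuousOn
    (fun x hx => ⟨(hΨpos x (subset_closure hx)).le, hΨub x (subset_closure hx)⟩)
    (fun x hx => (hΨeq x hx).le) (fun x hx => (hΨbd x hx).ge)
    hseq2 (fun n => (hseq1 n).continuousOn) hseq0 hseqn hseqbd
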